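/- Define α := inf { ∫_Ω min{ (1/2) a |F + C|², (1/2) b |F + D|² } dx : (v, F) an admissible pair }. Then there exist a sequence of admissible pairs (u^k, E^k), an admissible pair (u, E), measurable functions χ_a^k, χ_b^k : Ω → {0,1} with χ_a^k + χ_b^k = 1 a.e. in Ω, and measurable functions χ_a, χ_b : Ω → [0,1] with χ_a + χ_b = 1 a.e. in Ω, such that: (i) ∫_Ω min{ (1/2) a |E^k + C|², (1/2) b |E^k + D|² } dx → α as k → ∞; (ii) u^k → u weakly in L²(Ω; ℝⁿ) and E^k → E weakly in L²(Ω; Sym(n)); (iii) χ_a^k → χ_a and χ_b^k → χ_b weak* in L^∞(Ω); (iv) ∫_Ω [ (1/2) χ_a^k a |E^k + C|² + (1/2) χ_b^k b |E^k + D|² ] dx → α; (v) for every k and every admissible pair (w, G): ∫_Ω [ (1/2) χ_a^k a |E^k + C|² + (1/2) χ_b^k b |E^k + D|² ] dx ≤ ∫_Ω [ (1/2) χ_a^k a |G + C|² + (1/2) χ_b^k b |G + D|² ] dx. -/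

import Mathlib

open MeasureTheory Filter Topology

noncomputable section

abbrev RV (n : ℕ) := Fin n → ℝ
abbrev Mat (n : ℕ) := Matrix (Fin n) (Fin n) ℝ
abbrev MField (n : ℕ) := RV n → Mat n
abbrev VField (n : ℕ) := RV n → RV n

/-- Frobenius inner product of matrices: `P·Q = ∑ᵢⱼ Pᵢⱼ Qᵢⱼ`. -/
def mdot {n : ℕ} (P Q : Mat n) : ℝ := ∑ i, ∑ j, P i j * Q i j

/-- A matrix field takes symmetric values a.e. on `s`. -/
def SymOn {n : ℕ} (E : MField n) (s : Set (RV n)) : Prop :=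
  ∀ᵐ x ∂(volume : Measure (RV n)), x ∈ s → ∀ i j, E x i j = E x j i

/-- Matrix field in L² on `s`: componentwise measurable and `|E|²` integrable on `s`. -/
def L2MOn {n : ℕ} (E : MField n) (s : Set (RV n)) : Prop :=
  (∀ i j, Measurable fun x => E x i j) ∧
    IntegrableOn (fun x => mdot (E x) (E x)) s volume

/-- Vector field in L² on `s`. -/
def L2VOn {n : ℕ} (u : VField n) (s : Set (RV n)) : Prop :=
  (∀ i, Measurable fun x => u x i) ∧
    IntegrableOn (fun x => ∑ i, u x i * u x i) s volume

/-- Scalar function in L∞ on `s`. -/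
def LinfROn {n : ℕ} (f : RV n → ℝ) (s : Set (RV n)) : Prop :=
  Measurable f ∧ ∃ M : ℝ, ∀ᵐ x ∂(volume : Measure (RV n)), x ∈ s → |f x| ≤ M

/-- Matrix field in L∞ on `s`. -/
def LinfMOn {n : ℕ} (F : MField n) (s : Set (RV n)) : Prop :=
  (∀ i j, Measurable fun x => F x i j) ∧
    ∃ M : ℝ, ∀ᵐ x ∂(volume : Measure (RV n)), x ∈ s → ∀ i j, |F x i j| ≤ M

/-- `E` is the weak symmetrized gradient of `u`:
for all `i j` and every test function `φ ∈ C_c^∞(ℝⁿ)`,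
`∫ Eᵢⱼ φ = -(1/2) ∫ (uᵢ ∂ⱼφ + uⱼ ∂ᵢφ)`. -/
def IsSymGrad {n : ℕ} (u : VField n) (E : MField n) : Prop :=
  ∀ i j, ∀ φ : RV n → ℝ, ContDiff ℝ (⊤ : ℕ∞) φ → HasCompactSupport φ →
    ∫ x, E x i j * φ x =
      -(1 / 2) * ∫ x, (u x i * fderiv ℝ φ x (Pi.single j 1) +
        u x j * fderiv ℝ φ x (Pi.single i 1))

/-- Admissible pair: the encoding of `v ∈ H¹₀(Ω;ℝⁿ)` together with its symmetrized
gradient `ε(v)`. -/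
structure AdmPair (n : ℕ) (Ω : Set (RV n)) where
  u : VField n
  E : MField n
  hu : L2VOn u Set.univ
  hE : L2MOn E Set.univ
  hsym : SymOn E Set.univ
  huz : ∀ᵐ x ∂(volume : Measure (RV n)), x ∉ Ω → u x = 0
  hEz : ∀ᵐ x ∂(volume : Measure (RV n)), x ∉ Ω → E x = 0
  hgrad : IsSymGrad u E

/-- Weak convergence in `L²(s; Sym(n))`. -/
def WeakL2M {n : ℕ} (Ek : ℕ → MField n) (E : MField n) (s : Set (RV n)) : Prop :=
  ∀ G : MField n, L2MOn G s →
    Tendsto (fun k => ∫ x in s, mdot (Ek k x) (G x)) atTop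
      (𝓝 (∫ x in s, mdot (E x) (G x)))

/-- Weak convergence in `L²(s; ℝⁿ)`. -/
def WeakL2V {n : ℕ} (uk : ℕ → VField n) (u : VField n) (s : Set (RV n)) : Prop :=
  ∀ g : VField n, L2VOn g s →
    Tendsto (fun k => ∫ x in s, ∑ i, uk k x i * g x i) atTop
      (𝓝 (∫ x in s, ∑ i, u x i * g x i))

/-- Weak* convergence in `L∞(s)`. -/
def WeakStarLinf {n : ℕ} (fk : ℕ → RV n → ℝ) (f : RV n → ℝ) (s : Set (RV n)) : Prop :=
  ∀ h : RV n → ℝ, IntegrableOn h s volume →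
    Tendsto (fun k => ∫ x in s, fk k x * h x) atTop (𝓝 (∫ x in s, f x * h x))

/-- Weak convergence in `L¹(s)`. -/
def WeakL1 {n : ℕ} (fk : ℕ → RV n → ℝ) (f : RV n → ℝ) (s : Set (RV n)) : Prop :=
  ∀ g : RV n → ℝ, Measurable g →
    (∃ M : ℝ, ∀ᵐ x ∂(volume : Measure (RV n)), x ∈ s → |g x| ≤ M) →
    Tendsto (fun k => ∫ x in s, fk k x * g x) atTop (𝓝 (∫ x in s, f x * g x))

/-- Uniform integrability of a family on `s`. -/
def UnifIntOn {n : ℕ} (fk : ℕ → RV n → ℝ) (s : Set (RV n)) : Prop :=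
  ∀ ε : ℝ, 0 < ε → ∃ η : ℝ, 0 < η ∧ ∀ A : Set (RV n), MeasurableSet A → A ⊆ s →
    volume A < ENNReal.ofReal η → ∀ k, ∫ x in A, |fk k x| < ε

/-- The double-well integrand `min{½a|F+C|², ½b|F+D|²}`. -/
def phaseMin {n : ℕ} (a b : RV n → ℝ) (C D : MField n) (F : MField n) (x : RV n) : ℝ :=
  min (1 / 2 * a x * mdot (F x + C x) (F x + C x))
      (1 / 2 * b x * mdot (F x + D x) (F x + D x))

/-- The nonconvex energy. -/
def Jfun {n : ℕ} (Ω : Set (RV n)) (a b : RV n → ℝ) (C D : MField n) (F : MField n) : ℝ :=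
  ∫ x in Ω, phaseMin a b C D F x

/-- The infimum `α` of the nonconvex problem over admissible pairs. -/
def alphaInf {n : ℕ} (Ω : Set (RV n)) (a b : RV n → ℝ) (C D : MField n) : ℝ :=
  sInf { r : ℝ | ∃ P : AdmPair n Ω, r = Jfun Ω a b C D P.E }

/-- The convexified energy `∫ [½χₐa|F+C|² + ½χᵦb|F+D|²]`. -/
def Jconv {n : ℕ} (Ω : Set (RV n)) (χa χb a b : RV n → ℝ) (C D : MField n)
    (F : MField n) : ℝ :=
  ∫ x in Ω, (1 / 2 * χa x * a x * mdot (F x + C x) (F x + C x)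
    + 1 / 2 * χb x * b x * mdot (F x + D x) (F x + D x))

/-- `A⁺ = (aC + bD)/2`. -/
def Aplus {n : ℕ} (a b : RV n → ℝ) (C D : MField n) : MField n :=
  fun x => (2 : ℝ)⁻¹ • (a x • C x + b x • D x)

/-- `A⁻ = (bD − aC)/2`. -/
def Aminus {n : ℕ} (a b : RV n → ℝ) (C D : MField n) : MField n :=
  fun x => (2 : ℝ)⁻¹ • (b x • D x - a x • C x)

/-- The integrand on `Ω \ Ω₀`:
`(ab(C−D)/(b−a))·F + ((bD−aC)/(b−a))·q + ab(|C|²−|D|²)/(2(b−a)) − t·ab|C−D|²/(2(b−a))`. -/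
def Goff {n : ℕ} (a b : RV n → ℝ) (C D : MField n) (F q : MField n) (t : RV n → ℝ)
    (x : RV n) : ℝ :=
  a x * b x / (b x - a x) * mdot (C x - D x) (F x) +
    (b x - a x)⁻¹ * mdot (b x • D x - a x • C x) (q x) +
    a x * b x * (mdot (C x) (C x) - mdot (D x) (D x)) / (2 * (b x - a x)) -
    t x * (a x * b x * mdot (C x - D x) (C x - D x) / (2 * (b x - a x)))

/-- `Ω₀ = {x ∈ Ω : a(x) = b(x)}`. -/
def Omega0 {n : ℕ} (Ω : Set (RV n)) (a b : RV n → ℝ) : Set (RV n) :=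
  {x ∈ Ω | a x = b x}

/-!
Take a minimizing sequence `W k` of the nonconvex energy `J` and freeze, for each `k`, the set
where `W k` prefers the first phase. The frozen energy `J k` dominates `J`, agrees with it at `W k`,
and is a weighted least-squares functional `‖T f - g‖²` on the closed subspace of `L²` formed by the
admissible pairs, coercive by a Poincaré inequality. Orthogonal projection onto the range of `T`
therefore gives a minimizer `P k` of `J k`, and
`α ≤ J (P k) ≤ J k (P k) ≤ J k (W k) = J (W k) → α`.
Bounded sequences in a Hilbert space have weakly convergent subsequences, and closed convex sets are
weakly closed: this gives the limit of `P k`, and the limit of the phase indicators as functions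
with values in `[0, 1]`, first against `L²` and then, by density, against `L¹` test functions.
-/

section Hilbert

variable {H : Type*} [NormedAddCommGroup H] [InnerProductSpace ℝ H]

lemma exists_subseq_tendsto_inner [CompleteSpace H] [TopologicalSpace.SeparableSpace H]
    {x : ℕ → H} {M : ℝ} (hM : ∀ k, ‖x k‖ ≤ M) :
    ∃ (y : H) (φ : ℕ → ℕ), StrictMono φ ∧
      ∀ z, Tendsto (fun k => inner ℝ (x (φ k)) z) atTop (𝓝 (inner ℝ y z)) := by
  let T : ℕ → WeakDual ℝ H := fun k =>
    StrongDual.toWeakDual (InnerProductSpace.toDual ℝ H (x k))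
  have hT k : T k ∈ WeakDual.toStrongDual ⁻¹' Metric.closedBall (0 : StrongDual ℝ H) M :=
    mem_closedBall_zero_iff.2 (((InnerProductSpace.toDual ℝ H).norm_map (x k)).trans_le (hM k))
  obtain ⟨S, -, φ, hφ, hlim⟩ := WeakDual.isSeqCompact_closedBall ℝ H 0 M hT
  refine ⟨(InnerProductSpace.toDual ℝ H).symm (WeakDual.toStrongDual S), φ, hφ, fun z => ?_⟩
  rw [InnerProductSpace.toDual_symm_apply]
  exact ((WeakDual.eval_continuous z).tendsto S).comp hlim

lemma mem_of_tendsto_inner_of_isClosed_of_convex [CompleteSpace H] {K : Set H} (hKc : IsClosed K)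
    (hK : Convex ℝ K) {x : ℕ → H} {y : H} (hx : ∀ k, x k ∈ K)
    (hxy : ∀ z, Tendsto (fun k => inner ℝ (x k) z) atTop (𝓝 (inner ℝ y z))) : y ∈ K := by
  obtain ⟨v, hvK, hv⟩ := exists_norm_eq_iInf_of_complete_convex ⟨x 0, hx 0⟩ hKc.isComplete hK y
  have hproj := (norm_eq_iInf_iff_real_inner_le_zero hK hvK).1 hv
  have hle : inner ℝ (y - v) (y - v) ≤ 0 := by
    refine le_of_tendsto' (((hxy (y - v)).sub_const (inner ℝ v (y - v))).congr fun k => ?_)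
      (fun k => hproj (x k) (hx k)) |>.trans_eq' ?_
    · rw [← inner_sub_left, real_inner_comm]
    · rw [← inner_sub_left]
  rwa [sub_eq_zero.1 (real_inner_self_nonpos.1 hle)]

lemma exists_forall_norm_map_sub_le {E : Type*} [NormedAddCommGroup E] [NormedSpace ℝ E]
    [CompleteSpace E] {T : E →L[ℝ] H} {c : NNReal} (hT : AntilipschitzWith c T) (g : H) :
    ∃ x, ∀ y, ‖T x - g‖ ≤ ‖T y - g‖ := by
  have hcomplete : IsComplete (LinearMap.range T.toLinearMap : Set H) := by
    exact hT.isComplete_range T.uniformContinuous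
  obtain ⟨_, ⟨x, rfl⟩, hx⟩ :=
    Submodule.exists_norm_eq_iInf_of_complete_subspace _ hcomplete g
  refine ⟨x, fun y => ?_⟩
  rw [norm_sub_rev, norm_sub_rev (T y)]
  exact hx.trans_le (ciInf_le ⟨0, by rintro _ ⟨w, rfl⟩; exact norm_nonneg _⟩
    (⟨T y, y, rfl⟩ : LinearMap.range T.toLinearMap))

end Hilbert

section AeMem

variable {α E : Type*} [MeasurableSpace α] {μ : Measure α} [NormedAddCommGroup E] {p : ENNReal}
  {S : α → Set E}

lemma isClosed_setOf_ae_mem [Fact (1 ≤ p)] (hS : ∀ x, IsClosed (S x)) :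
    IsClosed {f : Lp E p μ | ∀ᵐ x ∂μ, f x ∈ S x} := by
  refine IsSeqClosed.isClosed fun f g hf hfg => ?_
  obtain ⟨ns, -, hns⟩ := (tendstoInMeasure_of_tendsto_Lp hfg).exists_seq_tendsto_ae
  filter_upwards [hns, ae_all_iff.2 hf] with x hx hfx
  exact (hS x).mem_of_tendsto hx (.of_forall fun k => hfx (ns k))

lemma convex_setOf_ae_mem [NormedSpace ℝ E] (hS : ∀ x, Convex ℝ (S x)) :
    Convex ℝ {f : Lp E p μ | ∀ᵐ x ∂μ, f x ∈ S x} := by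
  intro f hf g hg s t hs ht hst
  filter_upwards [hf, hg, Lp.coeFn_add (s • f) (t • g), Lp.coeFn_smul s f, Lp.coeFn_smul t g]
    with x hfx hgx hadd hsf htg
  rw [hadd, Pi.add_apply, hsf, htg]
  exact hS x hfx hgx hs ht hst

/-- The subspace of the fields in `Lp` with values in a prescribed, possibly varying, subspace. -/
def aeMemSubmodule [NormedSpace ℝ E] (p : ENNReal) (μ : Measure α) (S : α → Submodule ℝ E) :
    Submodule ℝ (Lp E p μ) where
  carrier := {f | ∀ᵐ x ∂μ, f x ∈ S x}
  zero_mem' := by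
    filter_upwards [Lp.coeFn_zero E p μ] with x hx using hx ▸ (S x).zero_mem
  add_mem' {f g} hf hg := by
    filter_upwards [hf, hg, Lp.coeFn_add f g] with x hfx hgx hx using hx ▸ (S x).add_mem hfx hgx
  smul_mem' c f hf := by
    filter_upwards [hf, Lp.coeFn_smul c f] with x hfx hx using hx ▸ (S x).smul_mem c hfx

end AeMem

section L2

variable {α E : Type*} [MeasurableSpace α] {μ : Measure α} [NormedAddCommGroup E]
  [InnerProductSpace ℝ E]

lemma inner_eq_integral_of_ae_eq {F G : Lp E 2 μ} {f g : α → E} (hF : F =ᵐ[μ] f)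
    (hG : G =ᵐ[μ] g) : inner ℝ F G = ∫ x, inner ℝ (f x) (g x) ∂μ := by
  rw [L2.inner_def]
  refine integral_congr_ae ?_
  filter_upwards [hF, hG] with x hfx hgx
  rw [hfx, hgx]

lemma norm_sq_eq_integral_of_ae_eq {F : Lp E 2 μ} {f : α → E} (hF : F =ᵐ[μ] f) :
    ‖F‖ ^ 2 = ∫ x, ‖f x‖ ^ 2 ∂μ := by
  simp only [← real_inner_self_eq_norm_sq, inner_eq_integral_of_ae_eq hF hF]

lemma integral_mul_eq_inner {f : α → ℝ} {F : Lp ℝ 2 μ} (hF : F =ᵐ[μ] f) {h : α → ℝ}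
    (hh : MemLp h 2 μ) : ∫ x, f x * h x ∂μ = inner ℝ F (hh.toLp h) := by
  simp [inner_eq_integral_of_ae_eq hF hh.coeFn_toLp, mul_comm]

lemma exists_clm_norm_sq_eq_integral {F : Type*} [NormedAddCommGroup F] [InnerProductSpace ℝ F]
    (L : E →L[ℝ] F) {w : α → ℝ} {M : ℝ} (hw : AEStronglyMeasurable w μ)
    (hwM : ∀ᵐ x ∂μ, w x ∈ Set.Icc 0 M) :
    ∃ T : Lp E 2 μ →L[ℝ] Lp F 2 μ, ∀ f, ‖T f‖ ^ 2 = ∫ x, w x * ‖L (f x)‖ ^ 2 ∂μ := by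
  have hρ : MemLp (fun x => √(w x)) ⊤ μ :=
    memLp_top_of_bound (Real.continuous_sqrt.comp_aestronglyMeasurable hw) (√M) <|
      hwM.mono fun x hx => by
        rw [Real.norm_of_nonneg (Real.sqrt_nonneg _)]
        exact Real.sqrt_le_sqrt hx.2
  let T := (ContinuousLinearMap.lsmul ℝ ℝ).holderL μ ⊤ 2 2 (hρ.toLp _) ∘L L.compLpL 2 μ
  refine ⟨T, fun f => ?_⟩
  have hT : T f =ᵐ[μ] fun x => √(w x) • L (f x) := by
    filter_upwards [(ContinuousLinearMap.lsmul ℝ ℝ).coeFn_holder (r := 2) (hρ.toLp _)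
      (L.compLpL 2 μ f), hρ.coeFn_toLp, L.coeFn_compLpL f] with x hx hρx hLx
    rw [← hLx, ← hρx]
    exact hx
  rw [norm_sq_eq_integral_of_ae_eq hT]
  refine integral_congr_ae (hwM.mono fun x hx => ?_)
  simp only [norm_smul, mul_pow, Real.norm_eq_abs, sq_abs, Real.sq_sqrt hx.1]

lemma exists_clm_norm_sq_eq_setIntegral {F : Type*} [NormedAddCommGroup F] [InnerProductSpace ℝ F]
    (L : E →L[ℝ] F) {s : Set α} (hs : MeasurableSet s) {w : α → ℝ} {M : ℝ}
    (hw : AEStronglyMeasurable w μ) (hwM : ∀ᵐ x ∂μ, x ∈ s → w x ∈ Set.Icc 0 M) :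
    ∃ T : Lp E 2 μ →L[ℝ] Lp F 2 μ, ∀ f, ‖T f‖ ^ 2 = ∫ x in s, w x * ‖L (f x)‖ ^ 2 ∂μ := by
  have hind : ∀ᵐ x ∂μ, s.indicator w x ∈ Set.Icc 0 (max 0 M) := hwM.mono fun x hx => by
    by_cases hxs : x ∈ s
    · rw [Set.indicator_of_mem hxs]
      exact ⟨(hx hxs).1, le_max_of_le_right (hx hxs).2⟩
    · rw [Set.indicator_of_notMem hxs]
      exact ⟨le_rfl, le_max_left _ _⟩
  obtain ⟨T, hT⟩ := exists_clm_norm_sq_eq_integral L (hw.indicator hs) hind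
  refine ⟨T, fun f => ?_⟩
  simp only [hT, ← integral_indicator hs, Set.indicator_mul_left]

end L2

section WeakStar

variable {α : Type*} [MeasurableSpace α] {μ : Measure α}

lemma lipschitzWith_integral_mul {f : α → ℝ} {C : NNReal} (hf : AEStronglyMeasurable f μ)
    (hC : ∀ᵐ x ∂μ, ‖f x‖ ≤ C) :
    LipschitzWith C fun h : Lp ℝ 1 μ => ∫ x, f x * h x ∂μ := by
  have hint (h : Lp ℝ 1 μ) : Integrable (fun x => f x * h x) μ :=
    (L1.integrable_coeFn h).bdd_mul hf hC
  refine LipschitzWith.of_dist_le_mul fun h₁ h₂ => ?_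
  rw [Real.dist_eq, ← integral_sub (hint h₁) (hint h₂), ← Real.norm_eq_abs,
    L1.dist_eq_integral_dist, ← integral_const_mul]
  refine norm_integral_le_of_norm_le
    (((L1.integrable_coeFn h₁).sub (L1.integrable_coeFn h₂)).norm.const_mul C) ?_
  filter_upwards [hC] with x hx
  rw [← mul_sub, norm_mul, dist_eq_norm]
  gcongr

lemma tendsto_integral_mul_of_forall_memLp_two [IsFiniteMeasure μ] {f : ℕ → α → ℝ} {g : α → ℝ}
    {C : NNReal} (hf : ∀ k, AEStronglyMeasurable (f k) μ) (hfC : ∀ k, ∀ᵐ x ∂μ, ‖f k x‖ ≤ C)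
    (hg : AEStronglyMeasurable g μ) (hgC : ∀ᵐ x ∂μ, ‖g x‖ ≤ C)
    (hfg : ∀ h, MemLp h 2 μ →
      Tendsto (fun k => ∫ x, f k x * h x ∂μ) atTop (𝓝 (∫ x, g x * h x ∂μ)))
    {h : α → ℝ} (hh : Integrable h μ) :
    Tendsto (fun k => ∫ x, f k x * h x ∂μ) atTop (𝓝 (∫ x, g x * h x ∂μ)) := by
  have hcongr {h₁ h₂ : α → ℝ} (hae : h₁ =ᵐ[μ] h₂) (u : α → ℝ) :
      ∫ x, u x * h₁ x ∂μ = ∫ x, u x * h₂ x ∂μ :=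
    integral_congr_ae (hae.mono fun x hx => by simp only [hx])
  have hadd {h₁ h₂ : α → ℝ} (hi₁ : Integrable h₁ μ) (hi₂ : Integrable h₂ μ) {u : α → ℝ}
      (hu : AEStronglyMeasurable u μ) (huC : ∀ᵐ x ∂μ, ‖u x‖ ≤ C) :
      ∫ x, u x * h₁ x ∂μ + ∫ x, u x * h₂ x ∂μ = ∫ x, u x * (h₁ + h₂) x ∂μ := by
    rw [← integral_add (hi₁.bdd_mul hu huC) (hi₂.bdd_mul hu huC)]
    simp only [Pi.add_apply, mul_add]
  refine Integrable.induction (P := fun h : α → ℝ =>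
    Tendsto (fun k => ∫ x, f k x * h x ∂μ) atTop (𝓝 (∫ x, g x * h x ∂μ))) ?_ ?_ ?_ ?_ hh
  · exact fun c s hs _ => hfg _ ((memLp_const c).indicator hs)
  · intro h₁ h₂ _ hi₁ hi₂ ih₁ ih₂
    rw [← hadd hi₁ hi₂ hg hgC]
    exact (ih₁.add ih₂).congr fun k => hadd hi₁ hi₂ (hf k) (hfC k)
  · exact (LipschitzWith.uniformEquicontinuous _ C fun k =>
      lipschitzWith_integral_mul (hf k) (hfC k)).equicontinuous.isClosed_setOfPred_tendsto
        (lipschitzWith_integral_mul hg hgC).continuous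
  · intro h₁ h₂ hae _ ih
    simpa only [hcongr hae] using ih

lemma exists_subseq_tendsto_integral_mul [IsFiniteMeasure μ] [IsSeparable μ] {f : ℕ → α → ℝ}
    (hf : ∀ k, AEStronglyMeasurable (f k) μ) (hf01 : ∀ k, ∀ᵐ x ∂μ, f k x ∈ Set.Icc 0 1) :
    ∃ (g : α → ℝ) (φ : ℕ → ℕ), Measurable g ∧ (∀ x, g x ∈ Set.Icc 0 1) ∧ StrictMono φ ∧
      ∀ h, Integrable h μ →
        Tendsto (fun k => ∫ x, f (φ k) x * h x ∂μ) atTop (𝓝 (∫ x, g x * h x ∂μ)) := by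
  have hnorm {t : ℝ} (ht : t ∈ Set.Icc 0 1) : ‖t‖ ≤ (1 : NNReal) :=
    (Real.norm_of_nonneg ht.1).trans_le ht.2
  have hf1 k : ∀ᵐ x ∂μ, ‖f k x‖ ≤ (1 : NNReal) := (hf01 k).mono fun x => hnorm
  have hf2 k : MemLp (f k) 2 μ := .of_bound (hf k) _ (hf1 k)
  have hmem k : ∀ᵐ x ∂μ, (hf2 k).toLp (f k) x ∈ Set.Icc 0 1 := by
    filter_upwards [hf01 k, (hf2 k).coeFn_toLp] with x hx hfx using hfx ▸ hx
  have hbound k : ‖(hf2 k).toLp (f k)‖ ≤ _ :=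
    Lp.norm_le_of_ae_bound (NNReal.coe_nonneg 1) ((hmem k).mono fun x hx => hnorm hx)
  have : Fact ((2 : ENNReal) ≠ ⊤) := ⟨by norm_num⟩
  obtain ⟨G, φ, hφ, hG⟩ := exists_subseq_tendsto_inner hbound
  have hG01 : ∀ᵐ x ∂μ, G x ∈ Set.Icc 0 1 :=
    mem_of_tendsto_inner_of_isClosed_of_convex (K := {F : Lp ℝ 2 μ | ∀ᵐ x ∂μ, F x ∈ Set.Icc 0 1})
      (isClosed_setOf_ae_mem fun _ => isClosed_Icc)
      (convex_setOf_ae_mem fun _ => convex_Icc 0 1) (fun k => hmem (φ k)) hG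
  have hGg : G =ᵐ[μ] fun x => max 0 (min 1 (G x)) :=
    hG01.mono fun x hx => by simp only [min_eq_right hx.2, max_eq_right hx.1]
  have hgm : Measurable fun x => max 0 (min 1 (G x)) :=
    measurable_const.max (measurable_const.min (Lp.stronglyMeasurable G).measurable)
  have hg01 x : max 0 (min 1 (G x)) ∈ Set.Icc (0 : ℝ) 1 :=
    ⟨le_max_left _ _, max_le zero_le_one (min_le_left _ _)⟩
  refine ⟨_, φ, hgm, hg01, hφ, fun h hh => tendsto_integral_mul_of_forall_memLp_two
    (fun k => hf (φ k)) (fun k => hf1 (φ k)) hgm.aestronglyMeasurable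
    (.of_forall fun x => hnorm (hg01 x)) (fun h hh => ?_) hh⟩
  simpa only [integral_mul_eq_inner (hf2 _).coeFn_toLp hh, integral_mul_eq_inner hGg hh]
    using hG (hh.toLp h)

end WeakStar

section Poincare

open scoped ContDiff Convolution

variable {V : Type*} [NormedAddCommGroup V] [NormedSpace ℝ V] [MeasurableSpace V]

/-- `w` is the derivative of `u` in the direction `e` in the sense of distributions. -/
def HasWeakDirDeriv (μ : Measure V) (e : V) (u w : V → ℝ) : Prop :=
  ∀ φ : V → ℝ, ContDiff ℝ ∞ φ → HasCompactSupport φ →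
    ∫ x, w x * φ x ∂μ = -∫ x, u x * fderiv ℝ φ x e ∂μ

variable [BorelSpace V] [FiniteDimensional ℝ V] {μ : Measure V} [μ.IsAddHaarMeasure]

lemma hasDerivAt_integral_mul_comp_add_smul {u φ : V → ℝ} (hu : LocallyIntegrable u μ)
    (hφ : ContDiff ℝ 1 φ) (hφc : HasCompactSupport φ) (e : V) (t : ℝ) :
    HasDerivAt (fun t : ℝ => ∫ x, u x * φ (x + t • e) ∂μ)
      (∫ x, u x * fderiv ℝ φ (x + t • e) e ∂μ) t := by
  have hψc : HasCompactSupport fun y => φ (-y) := hφc.comp_homeomorph (Homeomorph.neg V)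
  have hψ : ContDiff ℝ 1 fun y => φ (-y) := hφ.comp contDiff_neg
  have hline : HasDerivAt (fun t : ℝ => t • -e) (-e) t := by
    simpa only [id, one_smul] using (hasDerivAt_id t).smul_const (-e)
  have hconv := (hψc.hasFDerivAt_convolution_right (ContinuousLinearMap.mul ℝ ℝ) hu hψ
    (t • -e)).comp_hasDerivAt t hline
  rw [convolution_precompR_apply _ hu (hψc.fderiv ℝ) (hψ.continuous_fderiv one_ne_zero)] at hconv
  have hψ' y : fderiv ℝ (fun y => φ (-y)) y (-e) = fderiv ℝ φ (-y) e := by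
    have hφy : HasFDerivAt (fun y => φ (-y)) _ y :=
      ((hφ.differentiable one_ne_zero) (-y)).hasFDerivAt.comp y (hasFDerivAt_id y).neg
    rw [hφy.fderiv]
    simp
  have hrefl (s : ℝ) (x : V) : -(s • -e - x) = x + s • e := by rw [smul_neg]; abel
  simpa only [Function.comp_def, convolution_def, ContinuousLinearMap.mul_apply', hψ',
    hrefl] using hconv

/-- By density `f` may be taken smooth; then `t ↦ ⟪u, f (· + t • e)⟫` has derivative bounded by
`‖w‖ * ‖f‖`, and the mean value inequality applies. -/
lemma HasWeakDirDeriv.abs_inner_sub_le {e : V} {u w : Lp ℝ 2 μ} (h : HasWeakDirDeriv μ e u w)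
    (f : Lp ℝ 2 μ) (t : ℝ) :
    |inner ℝ u (Lp.compMeasurePreserving (· + t • e) (measurePreserving_add_right μ _) f - f)| ≤
      |t| * (‖w‖ * ‖f‖) := by
  let τ (s : ℝ) := Lp.compMeasurePreserving (E := ℝ) (p := 2) (· + s • e)
    (measurePreserving_add_right μ (s • e))
  have hτ s : Continuous (τ s) := (Lp.isometry_compMeasurePreserving _).continuous
  change |inner ℝ u (τ t f - f)| ≤ _
  refine (Lp.dense_hasCompactSupport_contDiff (F := ℝ) (μ := μ) (p := 2) (by norm_num)).induction
    (P := fun f => |inner ℝ u (τ t f - f)| ≤ |t| * (‖w‖ * ‖f‖)) ?_ (isClosed_le ?_ ?_) f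
  · rintro f ⟨φ, hfφ, hφc, hφ⟩
    have hφ2 := hφ.continuous.memLp_of_hasCompactSupport (p := 2) (μ := μ) hφc
    obtain rfl : f = hφ2.toLp φ := Lp.ext (hfφ.trans hφ2.coeFn_toLp.symm)
    have hshift (s : ℝ) : inner ℝ u (τ s (hφ2.toLp φ)) = ∫ x, u x * φ (x + s • e) ∂μ :=
      (integral_mul_eq_inner .rfl
        (hφ2.comp_measurePreserving (measurePreserving_add_right μ (s • e)))).symm
    have hderiv_le (s : ℝ) : ‖∫ x, u x * fderiv ℝ φ (x + s • e) e ∂μ‖ ≤ ‖w‖ * ‖hφ2.toLp φ‖ := by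
      have htest := h (fun x => φ (x + s • e)) (hφ.comp (contDiff_id.add contDiff_const))
        (hφc.comp_homeomorph (Homeomorph.addRight (s • e)))
      simp only [fderiv_comp_add_right] at htest
      rw [← norm_neg, ← htest, ← Lp.norm_compMeasurePreserving (hφ2.toLp φ)
        (measurePreserving_add_right μ (s • e)), Lp.toLp_compMeasurePreserving]
      exact (integral_mul_eq_inner .rfl (hφ2.comp_measurePreserving
        (measurePreserving_add_right μ (s • e)))).symm ▸ norm_inner_le_norm _ _
    have hmean := convex_univ.norm_image_sub_le_of_norm_hasDerivWithin_le
      (fun s _ => (hasDerivAt_integral_mul_comp_add_smul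
        ((Lp.memLp u).locallyIntegrable one_le_two) (hφ.of_le (by simp)) hφc e s).hasDerivWithinAt)
      (fun s _ => hderiv_le s) (Set.mem_univ 0) (Set.mem_univ t)
    rw [sub_zero, Real.norm_eq_abs, ← hshift] at hmean
    simp only [zero_smul, add_zero] at hmean
    rw [integral_mul_eq_inner .rfl hφ2] at hmean
    rwa [inner_sub_right, mul_comm]
  · have := hτ t
    fun_prop
  · fun_prop

/-- The translate of `u` by `t • e` vanishes wherever `u` does not, so taking `f = u` in
`HasWeakDirDeriv.abs_inner_sub_le` leaves only `‖u‖ ^ 2` on the left. -/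
lemma HasWeakDirDeriv.norm_le {e : V} {u w : Lp ℝ 2 μ} (h : HasWeakDirDeriv μ e u w)
    {Ω : Set V} (hu : ∀ᵐ x ∂μ, x ∉ Ω → u x = 0) {t : ℝ} (hΩ : ∀ x ∈ Ω, x + t • e ∉ Ω) :
    ‖u‖ ≤ |t| * ‖w‖ := by
  have horth : inner ℝ u
      (Lp.compMeasurePreserving (· + t • e) (measurePreserving_add_right μ _) u) = 0 := by
    rw [L2.inner_def]
    refine integral_eq_zero_of_ae ?_
    have hshift := (measurePreserving_add_right μ (t • e)).quasiMeasurePreserving.ae hu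
    filter_upwards [hu, hshift, Lp.coeFn_compMeasurePreserving u
      (measurePreserving_add_right μ (t • e))] with x hx hxt hτ
    rw [hτ, Function.comp_apply]
    by_cases hxΩ : x ∈ Ω
    · rw [hxt (hΩ x hxΩ), inner_zero_right, Pi.zero_apply]
    · rw [hx hxΩ, inner_zero_left, Pi.zero_apply]
  have hle := h.abs_inner_sub_le u t
  rw [inner_sub_right, horth, zero_sub, abs_neg, real_inner_self_eq_norm_mul_norm,
    abs_mul, abs_norm, ← mul_assoc] at hle
  rcases (norm_nonneg u).eq_or_lt with hu0 | hu0
  · rw [← hu0]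
    positivity
  · exact le_of_mul_le_mul_right hle hu0

lemma HasWeakDirDeriv.integral_sq_le {e : V} {u w : V → ℝ} (h : HasWeakDirDeriv μ e u w)
    (hu2 : MemLp u 2 μ) (hw2 : MemLp w 2 μ) {Ω : Set V} (hu : ∀ᵐ x ∂μ, x ∉ Ω → u x = 0) {t : ℝ}
    (hΩ : ∀ x ∈ Ω, x + t • e ∉ Ω) : ∫ x, u x ^ 2 ∂μ ≤ t ^ 2 * ∫ x, w x ^ 2 ∂μ := by
  have hLp : HasWeakDirDeriv μ e (hu2.toLp u) (hw2.toLp w) := fun φ hφ hφc =>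
    ((integral_congr_ae (hw2.coeFn_toLp.mul (.refl _ φ))).trans (h φ hφ hφc)).trans
      (congrArg Neg.neg (integral_congr_ae (hu2.coeFn_toLp.mul (.refl _ _))).symm)
  have hzero : ∀ᵐ x ∂μ, x ∉ Ω → hu2.toLp u x = 0 := by
    filter_upwards [hu, hu2.coeFn_toLp] with x hx hux using hux ▸ hx
  have hsq := pow_le_pow_left₀ (norm_nonneg _) (hLp.norm_le hzero hΩ) 2
  rw [mul_pow, sq_abs, norm_sq_eq_integral_of_ae_eq hu2.coeFn_toLp,
    norm_sq_eq_integral_of_ae_eq hw2.coeFn_toLp] at hsq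
  simpa only [Real.norm_eq_abs, sq_abs] using hsq

end Poincare

section Jets

variable {n : ℕ}

/-- The matrix `A` as a vector, so that the Euclidean inner product becomes `mdot`. -/
def Mat.toEuclidean (A : Mat n) : EuclideanSpace ℝ (Fin n × Fin n) :=
  WithLp.toLp 2 fun p => A p.1 p.2

lemma Mat.inner_toEuclidean (A B : Mat n) : inner ℝ A.toEuclidean B.toEuclidean = mdot A B := by
  simp [Mat.toEuclidean, mdot, PiLp.inner_apply, Fintype.sum_prod_type, mul_comm]

lemma mdot_self_eq_norm_sq (A : Mat n) : mdot A A = ‖A.toEuclidean‖ ^ 2 := by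
  rw [← Mat.inner_toEuclidean, real_inner_self_eq_norm_sq]

lemma mdot_self_nonneg (A : Mat n) : 0 ≤ mdot A A :=
  mdot_self_eq_norm_sq A ▸ sq_nonneg _

/-- The space in which a displacement and its symmetrized gradient jointly take their values. -/
abbrev SymJet (n : ℕ) := WithLp 2 (EuclideanSpace ℝ (Fin n) × EuclideanSpace ℝ (Fin n × Fin n))

/-- The pair of fields `(u, E)` as one field. -/
def symJet (u : VField n) (E : MField n) (x : RV n) : SymJet n :=
  WithLp.toLp 2 (WithLp.toLp 2 (u x), (E x).toEuclidean)

lemma inner_symJet (u v : VField n) (E F : MField n) (x : RV n) :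
    inner ℝ (symJet u E x) (symJet v F x) = ∑ i, u x i * v x i + mdot (E x) (F x) := by
  rw [WithLp.prod_inner_apply, ← Mat.inner_toEuclidean]
  simp [symJet, PiLp.inner_apply, mul_comm]

lemma l2VOn_iff_memLp {u : VField n} {s : Set (RV n)} :
    L2VOn u s ↔ (∀ i, Measurable fun x => u x i) ∧
      MemLp (fun x => WithLp.toLp 2 (u x)) 2 (volume.restrict s) := by
  refine and_congr_right fun hu => ?_
  have hmeas : Measurable fun x => WithLp.toLp 2 (u x) :=
    (WithLp.measurable_toLp 2 _).comp (measurable_pi_iff.2 hu)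
  rw [memLp_two_iff_integrable_sq_norm hmeas.aestronglyMeasurable]
  simp only [IntegrableOn, EuclideanSpace.real_norm_sq_eq, ← sq]

lemma l2MOn_iff_memLp {E : MField n} {s : Set (RV n)} :
    L2MOn E s ↔ (∀ i j, Measurable fun x => E x i j) ∧
      MemLp (fun x => (E x).toEuclidean) 2 (volume.restrict s) := by
  refine and_congr_right fun hE => ?_
  have hmeas : Measurable fun x => (E x).toEuclidean :=
    (WithLp.measurable_toLp 2 _).comp (measurable_pi_iff.2 fun p => hE p.1 p.2)
  rw [memLp_two_iff_integrable_sq_norm hmeas.aestronglyMeasurable]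
  simp only [IntegrableOn, mdot_self_eq_norm_sq]

lemma memLp_symJet_iff {u : VField n} {E : MField n} {μ : Measure (RV n)} :
    MemLp (symJet u E) 2 μ ↔ MemLp (fun x => WithLp.toLp 2 (u x)) 2 μ ∧
      MemLp (fun x => (E x).toEuclidean) 2 μ :=
  memLp_prodLp_iff

/-- The field paired with `(u, E)` in the weak formulation of `IsSymGrad` for the indices `i, j`
and the test function `φ`. -/
def symGradTest (i j : Fin n) (φ : RV n → ℝ) : RV n → SymJet n :=
  symJet
    (fun x => (1 / 2 : ℝ) • (fderiv ℝ φ x (Pi.single j 1) • Pi.single i 1 +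
      fderiv ℝ φ x (Pi.single i 1) • Pi.single j 1))
    (fun x => φ x • Matrix.single i j 1)

lemma inner_symGradTest (u : VField n) (E : MField n) (i j : Fin n) (φ : RV n → ℝ) (x : RV n) :
    inner ℝ (symGradTest i j φ x) (symJet u E x) = E x i j * φ x +
      1 / 2 * (u x i * fderiv ℝ φ x (Pi.single j 1) + u x j * fderiv ℝ φ x (Pi.single i 1)) := by
  have hmat : mdot (φ x • Matrix.single i j 1) (E x) = E x i j * φ x := by
    simp [mdot, Matrix.single_apply, ite_and, mul_comm]
  rw [symGradTest, inner_symJet, hmat]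
  simp [Pi.single_apply, mul_add, Finset.sum_add_distrib, mul_comm, mul_left_comm]
  ring

lemma memLp_two_fderiv_apply {φ : RV n → ℝ} (hφ : ContDiff ℝ (⊤ : ℕ∞) φ)
    (hφc : HasCompactSupport φ) (e : RV n) : MemLp (fun x => fderiv ℝ φ x e) 2 volume :=
  ((hφ.continuous_fderiv (by simp)).clm_apply continuous_const).memLp_of_hasCompactSupport
    (hφc.fderiv_apply ℝ e)

lemma memLp_symGradTest (i j : Fin n) {φ : RV n → ℝ} (hφ : ContDiff ℝ (⊤ : ℕ∞) φ)
    (hφc : HasCompactSupport φ) : MemLp (symGradTest i j φ) 2 volume := by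
  have hderiv := memLp_two_fderiv_apply hφ hφc
  refine memLp_symJet_iff.2 ⟨memLp_piLp_iff.2 fun k => ?_, memLp_piLp_iff.2 fun p => ?_⟩
  · exact (((hderiv _).mul_const _).add ((hderiv _).mul_const _)).const_mul _
  · exact (hφ.continuous.memLp_of_hasCompactSupport hφc).mul_const _

lemma isSymGrad_iff_integral_inner_eq_zero {u : VField n} {E : MField n}
    (h : MemLp (symJet u E) 2 volume) :
    IsSymGrad u E ↔ ∀ i j, ∀ φ : RV n → ℝ, ContDiff ℝ (⊤ : ℕ∞) φ → HasCompactSupport φ →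
      ∫ x, inner ℝ (symGradTest i j φ x) (symJet u E x) = 0 := by
  obtain ⟨hu, hE⟩ := memLp_symJet_iff.1 h
  have hpairing i j {φ : RV n → ℝ} (hφ : ContDiff ℝ (⊤ : ℕ∞) φ) (hφc : HasCompactSupport φ) :
      ∫ x, inner ℝ (symGradTest i j φ x) (symJet u E x) = (∫ x, E x i j * φ x) +
        1 / 2 * ∫ x, (u x i * fderiv ℝ φ x (Pi.single j 1) +
          u x j * fderiv ℝ φ x (Pi.single i 1)) := by
    have hφ2 : MemLp φ 2 volume := hφ.continuous.memLp_of_hasCompactSupport hφc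
    have hderiv := memLp_two_fderiv_apply hφ hφc
    simp only [inner_symGradTest]
    rw [integral_add, integral_const_mul]
    · exact (hE.eval_piLp (i, j)).integrable_mul hφ2
    · exact (((hu.eval_piLp i).integrable_mul (hderiv _)).add
        ((hu.eval_piLp j).integrable_mul (hderiv _))).const_mul _
  refine forall₅_congr fun i j φ hφ hφc => ?_
  rw [hpairing i j hφ hφc, neg_mul, eq_neg_iff_add_eq_zero]

end Jets

section AdmissiblePairs

lemma mem_orthogonal_span_iff {H : Type*} [NormedAddCommGroup H] [InnerProductSpace ℝ H]
    {s : Set H} {f : H} : f ∈ (Submodule.span ℝ s)ᗮ ↔ ∀ g ∈ s, inner ℝ g f = 0 := by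
  refine ⟨fun hf g hg => hf g (Submodule.subset_span hg), fun hf g hg => ?_⟩
  refine Submodule.mem_orthogonal_singleton_iff_inner_left.1 (Submodule.span_le.2 ?_ hg)
  exact fun g hg => Submodule.mem_orthogonal_singleton_iff_inner_left.2 (hf g hg)

variable {n : ℕ} {Ω : Set (RV n)}

/-- The values at `x` allowed for `(u, E)` by the pointwise constraints on an admissible pair. -/
def admFiber (Ω : Set (RV n)) (x : RV n) : Submodule ℝ (SymJet n) where
  carrier := {y | (∀ i j, y.snd (i, j) = y.snd (j, i)) ∧ (x ∉ Ω → y = 0)}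
  zero_mem' := ⟨fun _ _ => rfl, fun _ => rfl⟩
  add_mem' {y z} hy hz := ⟨fun i j => by simp [hy.1 i j, hz.1 i j],
    fun hx => by rw [hy.2 hx, hz.2 hx, add_zero]⟩
  smul_mem' c y hy := ⟨fun i j => by simp [hy.1 i j], fun hx => by rw [hy.2 hx, smul_zero]⟩

/-- The admissible pairs as a subspace of `L²`: the differential constraint `IsSymGrad` is
orthogonality to the fields `symGradTest i j φ`. -/
def admSubspace (Ω : Set (RV n)) : Submodule ℝ (Lp (SymJet n) 2 (volume : Measure (RV n))) :=
  aeMemSubmodule 2 volume (admFiber Ω) ⊓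
    (Submodule.span ℝ {Ψ : Lp (SymJet n) 2 (volume : Measure (RV n)) | ∃ i j φ,
      ContDiff ℝ (⊤ : ℕ∞) φ ∧ HasCompactSupport φ ∧ Ψ =ᵐ[volume] symGradTest i j φ})ᗮ

lemma isClosed_admSubspace :
    IsClosed (admSubspace Ω : Set (Lp (SymJet n) 2 (volume : Measure (RV n)))) := by
  have hfiber (x : RV n) : IsClosed {y : SymJet n | y ∈ admFiber Ω x} := by
    have hsym : IsClosed {y : SymJet n | ∀ i j, y.snd (i, j) = y.snd (j, i)} := by
      simp only [Set.ofPred_forall]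
      exact isClosed_iInter fun i => isClosed_iInter fun j =>
        isClosed_eq (by fun_prop) (by fun_prop)
    have hzero : IsClosed {y : SymJet n | x ∉ Ω → y = 0} := by
      rw [Set.ofPred_forall]
      exact isClosed_iInter fun _ => isClosed_singleton
    exact hsym.inter hzero
  exact (isClosed_setOf_ae_mem hfiber).inter (Submodule.isClosed_orthogonal _)

lemma symJet_mem_admFiber_iff {u : VField n} {E : MField n} {x : RV n} :
    symJet u E x ∈ admFiber Ω x ↔
      (∀ i j, E x i j = E x j i) ∧ (x ∉ Ω → u x = 0) ∧ (x ∉ Ω → E x = 0) := by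
  have hzero : symJet u E x = 0 ↔ u x = 0 ∧ E x = 0 := by
    simp [symJet, WithLp.ext_iff, Prod.ext_iff, Mat.toEuclidean, funext_iff, Matrix.ext_iff.symm]
  rw [← imp_and, ← hzero]
  rfl

lemma toLp_symJet_mem_admSubspace_iff {u : VField n} {E : MField n}
    (h : MemLp (symJet u E) 2 volume) :
    h.toLp (symJet u E) ∈ admSubspace Ω ↔ SymOn E Set.univ ∧ (∀ᵐ x, x ∉ Ω → u x = 0) ∧
      (∀ᵐ x, x ∉ Ω → E x = 0) ∧ IsSymGrad u E := by
  have hfiber : h.toLp (symJet u E) ∈ aeMemSubmodule 2 volume (admFiber Ω) ↔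
      ∀ᵐ x, (∀ i j, E x i j = E x j i) ∧ (x ∉ Ω → u x = 0) ∧ (x ∉ Ω → E x = 0) := by
    simp only [← symJet_mem_admFiber_iff]
    exact Filter.eventually_congr (h.coeFn_toLp.mono fun x hx => by rw [hx])
  have hgrad : IsSymGrad u E ↔ h.toLp (symJet u E) ∈ (Submodule.span ℝ
      {Ψ : Lp (SymJet n) 2 (volume : Measure (RV n)) | ∃ i j φ, ContDiff ℝ (⊤ : ℕ∞) φ ∧
        HasCompactSupport φ ∧ Ψ =ᵐ[volume] symGradTest i j φ})ᗮ := by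
    rw [isSymGrad_iff_integral_inner_eq_zero h, mem_orthogonal_span_iff]
    constructor
    · rintro hg Ψ ⟨i, j, φ, hφ, hφc, hΨ⟩
      rw [inner_eq_integral_of_ae_eq hΨ h.coeFn_toLp, hg i j φ hφ hφc]
    · intro hg i j φ hφ hφc
      have hΨ := (memLp_symGradTest i j hφ hφc).coeFn_toLp
      rw [← inner_eq_integral_of_ae_eq hΨ h.coeFn_toLp]
      exact hg _ ⟨i, j, φ, hφ, hφc, hΨ⟩
  rw [admSubspace, Submodule.mem_inf, hfiber, ← hgrad, eventually_and, eventually_and]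
  simp only [SymOn, Set.mem_univ, true_imp_iff, and_assoc]

lemma AdmPair.memLp (P : AdmPair n Ω) : MemLp (symJet P.u P.E) 2 volume := by
  have hu := (l2VOn_iff_memLp.1 P.hu).2
  have hE := (l2MOn_iff_memLp.1 P.hE).2
  rw [Measure.restrict_univ] at hu hE
  exact memLp_symJet_iff.2 ⟨hu, hE⟩

/-- An admissible pair as an element of `L²`. -/
def AdmPair.toLp (P : AdmPair n Ω) : Lp (SymJet n) 2 (volume : Measure (RV n)) :=
  P.memLp.toLp (symJet P.u P.E)

lemma AdmPair.coeFn_toLp (P : AdmPair n Ω) : P.toLp =ᵐ[volume] symJet P.u P.E :=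
  P.memLp.coeFn_toLp

lemma AdmPair.toLp_mem (P : AdmPair n Ω) : P.toLp ∈ admSubspace Ω :=
  (toLp_symJet_mem_admSubspace_iff P.memLp).2 ⟨P.hsym, P.huz, P.hEz, P.hgrad⟩

lemma AdmPair.exists_toLp_eq {f : Lp (SymJet n) 2 (volume : Measure (RV n))}
    (hf : f ∈ admSubspace Ω) : ∃ P : AdmPair n Ω, P.toLp = f := by
  let u : VField n := fun x => (f x).fst
  let E : MField n := fun x i j => (f x).snd (i, j)
  have hcoord {L : SymJet n → ℝ} (hL : Continuous L) : Measurable fun x => L (f x) :=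
    hL.measurable.comp (Lp.stronglyMeasurable f).measurable
  have hu i : Measurable fun x => u x i := hcoord (L := fun y => y.fst i) (by fun_prop)
  have hE i j : Measurable fun x => E x i j := hcoord (L := fun y => y.snd (i, j)) (by fun_prop)
  have hLp : MemLp (symJet u E) 2 volume := Lp.memLp f
  have hfE : hLp.toLp (symJet u E) = f := Lp.toLp_coeFn f _
  obtain ⟨hsym, huz, hEz, hgrad⟩ := (toLp_symJet_mem_admSubspace_iff hLp).1 (hfE ▸ hf)
  have hLp_univ : MemLp (symJet u E) 2 (volume.restrict Set.univ) := by
    rwa [Measure.restrict_univ]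
  exact ⟨⟨u, E, l2VOn_iff_memLp.2 ⟨hu, (memLp_symJet_iff.1 hLp_univ).1⟩,
    l2MOn_iff_memLp.2 ⟨hE, (memLp_symJet_iff.1 hLp_univ).2⟩, hsym, huz, hEz, hgrad⟩, hfE⟩

lemma exists_forall_add_smul_single_notMem (hΩ : Bornology.IsBounded Ω) :
    ∃ t : ℝ, ∀ i, ∀ x ∈ Ω, x + t • Pi.single i 1 ∉ Ω := by
  obtain ⟨R, hR⟩ := hΩ.exists_norm_le
  refine ⟨2 * R + 1, fun i x hx hxt => ?_⟩
  have hlow := (abs_le.1 ((norm_le_pi_norm x i).trans (hR x hx))).1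
  have hup := (abs_le.1 ((norm_le_pi_norm _ i).trans (hR _ hxt))).2
  simp only [Pi.add_apply, Pi.smul_apply, Pi.single_eq_same, smul_eq_mul, mul_one] at hup
  linarith

lemma IsSymGrad.hasWeakDirDeriv {u : VField n} {E : MField n} (h : IsSymGrad u E) (i : Fin n) :
    HasWeakDirDeriv volume (Pi.single i 1) (fun x => u x i) fun x => E x i i := fun φ hφ hφc => by
  rw [h i i φ hφ hφc]
  simp only [← two_mul, integral_const_mul]
  ring

lemma sum_sq_diag_le_mdot (A : Mat n) : ∑ i, A i i ^ 2 ≤ mdot A A := by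
  refine Finset.sum_le_sum fun i _ => ?_
  rw [sq]
  exact Finset.single_le_sum (f := fun j => A i j * A i j) (fun j _ => mul_self_nonneg _)
    (Finset.mem_univ i)

lemma AdmPair.integrable_mdot (P : AdmPair n Ω) : Integrable fun x => mdot (P.E x) (P.E x) :=
  integrableOn_univ.1 P.hE.2

lemma AdmPair.integral_sum_sq_le (P : AdmPair n Ω) {t : ℝ}
    (ht : ∀ i, ∀ x ∈ Ω, x + t • Pi.single i 1 ∉ Ω) :
    ∫ x, ∑ i, P.u x i ^ 2 ≤ t ^ 2 * ∫ x, mdot (P.E x) (P.E x) := by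
  obtain ⟨hu, hE⟩ := memLp_symJet_iff.1 P.memLp
  have hcomp i : ∫ x, P.u x i ^ 2 ≤ t ^ 2 * ∫ x, P.E x i i ^ 2 :=
    (P.hgrad.hasWeakDirDeriv i).integral_sq_le (hu.eval_piLp i) (hE.eval_piLp (i, i))
      (P.huz.mono fun x hx hxΩ => congrFun (hx hxΩ) i) (ht i)
  have hdiag i : Integrable fun x => P.E x i i ^ 2 := (hE.eval_piLp (i, i)).integrable_sq
  calc ∫ x, ∑ i, P.u x i ^ 2 = ∑ i, ∫ x, P.u x i ^ 2 :=
        integral_finsetSum _ fun i _ => (hu.eval_piLp i).integrable_sq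
    _ ≤ ∑ i, t ^ 2 * ∫ x, P.E x i i ^ 2 := Finset.sum_le_sum fun i _ => hcomp i
    _ = t ^ 2 * ∫ x, ∑ i, P.E x i i ^ 2 := by
        rw [← Finset.mul_sum, integral_finsetSum _ fun i _ => hdiag i]
    _ ≤ t ^ 2 * ∫ x, mdot (P.E x) (P.E x) := by
        gcongr
        · exact integrable_finsetSum _ fun i _ => hdiag i
        · exact P.integrable_mdot
        · exact fun x => sum_sq_diag_le_mdot _

lemma AdmPair.exists_norm_toLp_sq_le (hΩ : Bornology.IsBounded Ω) :
    ∃ c > 0, ∀ P : AdmPair n Ω, ‖P.toLp‖ ^ 2 ≤ c * ∫ x, mdot (P.E x) (P.E x) := by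
  obtain ⟨t, ht⟩ := exists_forall_add_smul_single_notMem hΩ
  refine ⟨t ^ 2 + 1, by positivity, fun P => ?_⟩
  have hu : Integrable fun x => ∑ i, P.u x i * P.u x i := integrableOn_univ.1 P.hu.2
  have hP := P.integral_sum_sq_le ht
  simp only [norm_sq_eq_integral_of_ae_eq P.coeFn_toLp, ← real_inner_self_eq_norm_sq,
    inner_symJet]
  rw [integral_add hu P.integrable_mdot]
  simp only [sq] at hP ⊢
  linarith

lemma AdmPair.inner_toLp (P : AdmPair n Ω) (hΩ : MeasurableSet Ω) {g : VField n} {G : MField n}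
    (h : MemLp (Ω.indicator (symJet g G)) 2 volume) :
    inner ℝ P.toLp (h.toLp _) = ∫ x in Ω, (∑ i, P.u x i * g x i + mdot (P.E x) (G x)) := by
  rw [inner_eq_integral_of_ae_eq P.coeFn_toLp h.coeFn_toLp, ← integral_indicator hΩ]
  congr 1 with x
  by_cases hx : x ∈ Ω
  · rw [Set.indicator_of_mem hx, Set.indicator_of_mem hx, inner_symJet]
  · rw [Set.indicator_of_notMem hx, Set.indicator_of_notMem hx, inner_zero_right]

lemma AdmPair.exists_subseq_tendsto (hΩ : MeasurableSet Ω) {P : ℕ → AdmPair n Ω} {M : ℝ}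
    (hM : ∀ k, ‖(P k).toLp‖ ≤ M) :
    ∃ (Q : AdmPair n Ω) (φ : ℕ → ℕ), StrictMono φ ∧ WeakL2V (fun k => (P (φ k)).u) Q.u Ω ∧
      WeakL2M (fun k => (P (φ k)).E) Q.E Ω := by
  have : Fact ((2 : ENNReal) ≠ ⊤) := ⟨by norm_num⟩
  obtain ⟨f, φ, hφ, hlim⟩ := exists_subseq_tendsto_inner hM
  obtain ⟨Q, rfl⟩ := AdmPair.exists_toLp_eq (mem_of_tendsto_inner_of_isClosed_of_convex
    isClosed_admSubspace (admSubspace Ω).convex (fun k => (P (φ k)).toLp_mem) hlim)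
  have hweak {g : VField n} {G : MField n} (h : MemLp (symJet g G) 2 (volume.restrict Ω)) :
      Tendsto (fun k => ∫ x in Ω, (∑ i, (P (φ k)).u x i * g x i + mdot ((P (φ k)).E x) (G x)))
        atTop (𝓝 (∫ x in Ω, (∑ i, Q.u x i * g x i + mdot (Q.E x) (G x)))) := by
    have hind := (memLp_indicator_iff_restrict hΩ).2 h
    simpa only [AdmPair.inner_toLp _ hΩ hind] using hlim (hind.toLp _)
  refine ⟨Q, φ, hφ, fun g hg => ?_, fun G hG => ?_⟩
  · simpa [mdot] using hweak (g := g) (G := 0)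
      (memLp_symJet_iff.2 ⟨(l2VOn_iff_memLp.1 hg).2, MemLp.zero⟩)
  · simpa using hweak (g := 0) (G := G)
      (memLp_symJet_iff.2 ⟨MemLp.zero, (l2MOn_iff_memLp.1 hG).2⟩)

end AdmissiblePairs

section StrainEnergy

variable {n : ℕ} {Ω : Set (RV n)}

/-- The elastic energy of the strain `F` with stiffness `w` and eigenstrain `-K`: this is what the
convexified energy becomes when the phases are frozen. -/
def strainEnergy (Ω : Set (RV n)) (w : RV n → ℝ) (K F : MField n) : ℝ :=
  ∫ x in Ω, 1 / 2 * w x * mdot (F x + K x) (F x + K x)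

lemma L2MOn.add {F K : MField n} (hF : L2MOn F Ω) (hK : L2MOn K Ω) :
    L2MOn (fun x => F x + K x) Ω :=
  l2MOn_iff_memLp.2 ⟨fun i j => (hF.1 i j).add (hK.1 i j),
    (l2MOn_iff_memLp.1 hF).2.add (l2MOn_iff_memLp.1 hK).2⟩

lemma L2MOn.integrableOn_mul_mdot {F : MField n} (hF : L2MOn F Ω) {w : RV n → ℝ}
    (hw : LinfROn w Ω) (hΩ : MeasurableSet Ω) :
    IntegrableOn (fun x => 1 / 2 * w x * mdot (F x) (F x)) Ω := by
  obtain ⟨M, hM⟩ := hw.2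
  simp only [mul_assoc]
  exact (hF.2.bdd_mul hw.1.aestronglyMeasurable ((ae_restrict_iff' hΩ).2 hM)).const_mul _

lemma AdmPair.l2MOn (P : AdmPair n Ω) : L2MOn P.E Ω :=
  ⟨P.hE.1, P.integrable_mdot.integrableOn⟩

lemma AdmPair.setIntegral_mdot (P : AdmPair n Ω) :
    ∫ x in Ω, mdot (P.E x) (P.E x) = ∫ x, mdot (P.E x) (P.E x) :=
  setIntegral_eq_integral_of_ae_compl_eq_zero <| P.hEz.mono fun x hx hxΩ => by
    simp [hx hxΩ, mdot]

lemma AdmPair.exists_norm_toLp_sq_le_strainEnergy (hΩ : MeasurableSet Ω)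
    (hΩb : Bornology.IsBounded Ω) {w : RV n → ℝ} (hw : LinfROn w Ω) {δ : ℝ} (hδ : 0 < δ)
    (hwδ : ∀ᵐ x, x ∈ Ω → δ ≤ w x) :
    ∃ c > 0, ∀ P : AdmPair n Ω, ‖P.toLp‖ ^ 2 ≤ c * strainEnergy Ω w 0 P.E := by
  obtain ⟨c, hc, hP⟩ := AdmPair.exists_norm_toLp_sq_le hΩb
  refine ⟨c * (2 / δ), by positivity, fun P => (hP P).trans ?_⟩
  have hle : δ / 2 * ∫ x in Ω, mdot (P.E x) (P.E x) ≤ strainEnergy Ω w 0 P.E := by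
    rw [strainEnergy, ← integral_const_mul]
    simp only [Pi.zero_apply, add_zero]
    refine setIntegral_mono_on_ae (P.l2MOn.2.const_mul _) (P.l2MOn.integrableOn_mul_mdot hw hΩ) hΩ
      (hwδ.mono fun x hx hxΩ => mul_le_mul_of_nonneg_right ?_ (mdot_self_nonneg _))
    linarith [hx hxΩ]
  rw [P.setIntegral_mdot] at hle
  rw [mul_assoc]
  gcongr
  rw [div_mul_eq_mul_div, le_div_iff₀ hδ]
  linarith

lemma exists_clm_norm_sq_eq_strainEnergy (hΩ : MeasurableSet Ω) {w : RV n → ℝ}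
    (hw : LinfROn w Ω) (hw0 : ∀ᵐ x, x ∈ Ω → 0 ≤ w x) {K : MField n} (hK : L2MOn K Ω) :
    ∃ (T : Lp (SymJet n) 2 (volume : Measure (RV n)) →L[ℝ]
        Lp (EuclideanSpace ℝ (Fin n × Fin n)) 2 (volume : Measure (RV n))) (g : _),
      ∀ P : AdmPair n Ω, ‖T P.toLp‖ ^ 2 = strainEnergy Ω w 0 P.E ∧
        ‖T P.toLp - g‖ ^ 2 = strainEnergy Ω w K P.E := by
  obtain ⟨M, hM⟩ := hw.2
  have hwM : ∀ᵐ x, x ∈ Ω → 1 / 2 * w x ∈ Set.Icc 0 (1 / 2 * M) := by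
    filter_upwards [hw0, hM] with x hx hxM hxΩ
    exact ⟨mul_nonneg one_half_pos.le (hx hxΩ),
      mul_le_mul_of_nonneg_left (le_of_abs_le (hxM hxΩ)) one_half_pos.le⟩
  obtain ⟨T, hT⟩ := exists_clm_norm_sq_eq_setIntegral (E := SymJet n)
    (F := EuclideanSpace ℝ (Fin n × Fin n)) (WithLp.sndL 2 ℝ _ _) hΩ
    (hw.1.const_mul (1 / 2)).aestronglyMeasurable hwM
  have hκ : MemLp (Ω.indicator (symJet 0 K)) 2 volume := (memLp_indicator_iff_restrict hΩ).2
    (memLp_symJet_iff.2 ⟨MemLp.zero, (l2MOn_iff_memLp.1 hK).2⟩)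
  have henergy {F : Lp (SymJet n) 2 (volume : Measure (RV n))} {G : MField n}
      (hF : ∀ᵐ x, x ∈ Ω → (F x).snd = (G x).toEuclidean) :
      ‖T F‖ ^ 2 = ∫ x in Ω, 1 / 2 * w x * mdot (G x) (G x) := by
    refine (hT F).trans (setIntegral_congr_ae hΩ (hF.mono fun x hx hxΩ => ?_))
    rw [mdot_self_eq_norm_sq, ← hx hxΩ]
    rfl
  refine ⟨T, -T (hκ.toLp _), fun P => ⟨henergy ?_, ?_⟩⟩
  · filter_upwards [P.coeFn_toLp] with x hx _
    simp [hx, symJet]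
  · rw [sub_neg_eq_add, ← map_add]
    refine henergy ?_
    filter_upwards [P.coeFn_toLp, hκ.coeFn_toLp, Lp.coeFn_add P.toLp (hκ.toLp _)]
      with x hPx hκx hx hxΩ
    rw [hx, Pi.add_apply, hPx, hκx, Set.indicator_of_mem hxΩ]
    rfl

lemma AdmPair.exists_forall_strainEnergy_le (hΩ : MeasurableSet Ω) (hΩb : Bornology.IsBounded Ω)
    {w : RV n → ℝ} (hw : LinfROn w Ω) {δ : ℝ} (hδ : 0 < δ) (hwδ : ∀ᵐ x, x ∈ Ω → δ ≤ w x)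
    {K : MField n} (hK : L2MOn K Ω) :
    ∃ P : AdmPair n Ω, ∀ Q : AdmPair n Ω, strainEnergy Ω w K P.E ≤ strainEnergy Ω w K Q.E := by
  have hw0 : ∀ᵐ x, x ∈ Ω → 0 ≤ w x := hwδ.mono fun x hx hxΩ => hδ.le.trans (hx hxΩ)
  obtain ⟨T, g, hT⟩ := exists_clm_norm_sq_eq_strainEnergy hΩ hw hw0 hK
  obtain ⟨c, hc, hcoer⟩ := AdmPair.exists_norm_toLp_sq_le_strainEnergy hΩ hΩb hw hδ hwδ
  have hanti : AntilipschitzWith (√c).toNNReal (T ∘L (admSubspace Ω).subtypeL) := by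
    refine AddMonoidHomClass.antilipschitz_of_bound _ fun ⟨f, hf⟩ => ?_
    obtain ⟨P, rfl⟩ := AdmPair.exists_toLp_eq hf
    refine le_of_sq_le_sq ?_ (by positivity)
    rw [mul_pow, Real.coe_toNNReal _ (Real.sqrt_nonneg c), Real.sq_sqrt hc.le]
    exact (hcoer P).trans_eq (by rw [← (hT P).1]; rfl)
  have : CompleteSpace (admSubspace Ω) := isClosed_admSubspace.completeSpace_coe
  obtain ⟨⟨f, hf⟩, hmin⟩ := exists_forall_norm_map_sub_le hanti g
  obtain ⟨P, rfl⟩ := AdmPair.exists_toLp_eq hf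
  refine ⟨P, fun Q => ?_⟩
  rw [← (hT P).2, ← (hT Q).2]
  exact pow_le_pow_left₀ (norm_nonneg _) (hmin ⟨Q.toLp, Q.toLp_mem⟩) 2

end StrainEnergy

section Phases

variable {n : ℕ} {Ω : Set (RV n)} {a b : RV n → ℝ} {C D : MField n}
  {A : Set (RV n)}

lemma LinfROn.piecewise (ha : LinfROn a Ω) (hb : LinfROn b Ω)
    (hA : MeasurableSet A) [DecidablePred (· ∈ A)] : LinfROn (A.piecewise a b) Ω := by
  obtain ⟨⟨ham, M, hM⟩, ⟨hbm, N, hN⟩⟩ := And.intro ha hb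
  refine ⟨ham.piecewise hA hbm, max M N, ?_⟩
  filter_upwards [hM, hN] with x hxM hxN hxΩ
  by_cases hxA : x ∈ A
  · simpa [hxA] using Or.inl (hxM hxΩ)
  · simpa [hxA] using Or.inr (hxN hxΩ)

lemma L2MOn.piecewise (hC : L2MOn C Ω) (hD : L2MOn D Ω)
    (hA : MeasurableSet A) [DecidablePred (· ∈ A)] : L2MOn (A.piecewise C D) Ω := by
  refine l2MOn_iff_memLp.2 ⟨fun i j => ?_, ?_⟩
  · have hij : (fun x => A.piecewise C D x i j) = A.piecewise (C · i j) (D · i j) :=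
      funext fun x => by by_cases hxA : x ∈ A <;> simp [hxA]
    exact hij ▸ (hC.1 i j).piecewise hA (hD.1 i j)
  · have hcomp : (fun x => (A.piecewise C D x).toEuclidean) =
        A.piecewise (fun x => (C x).toEuclidean) fun x => (D x).toEuclidean :=
      funext fun x => by by_cases hxA : x ∈ A <;> simp [hxA]
    exact hcomp ▸ MemLp.piecewise hA ((l2MOn_iff_memLp.1 hC).2.restrict A)
      ((l2MOn_iff_memLp.1 hD).2.restrict Aᶜ)

lemma jconv_indicator_eq_strainEnergy (A : Set (RV n)) [DecidablePred (· ∈ A)]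
    (F : MField n) :
    Jconv Ω (A.indicator 1) (Aᶜ.indicator 1) a b C D F =
      strainEnergy Ω (A.piecewise a b) (A.piecewise C D) F := by
  refine integral_congr_ae (.of_forall fun x => ?_)
  by_cases hxA : x ∈ A <;> simp [hxA]

lemma phaseMin_le_piecewise (A : Set (RV n)) [DecidablePred (· ∈ A)] (F : MField n)
    (x : RV n) :
    phaseMin a b C D F x ≤ 1 / 2 * A.piecewise a b x *
      mdot (F x + A.piecewise C D x) (F x + A.piecewise C D x) := by
  by_cases hxA : x ∈ A <;> simp only [hxA, Set.piecewise_eq_of_mem, Set.piecewise_eq_of_notMem,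
    not_false_eq_true, phaseMin, min_le_left, min_le_right]

lemma L2MOn.integrableOn_phaseMin {F : MField n} (hF : L2MOn F Ω) (hΩ : MeasurableSet Ω)
    (ha : LinfROn a Ω) (hb : LinfROn b Ω) (hC : L2MOn C Ω) (hD : L2MOn D Ω) :
    IntegrableOn (phaseMin a b C D F) Ω :=
  ((hF.add hC).integrableOn_mul_mdot ha hΩ).inf ((hF.add hD).integrableOn_mul_mdot hb hΩ)

lemma jfun_le_jconv_indicator {F : MField n} (hF : L2MOn F Ω) (hΩ : MeasurableSet Ω)
    (ha : LinfROn a Ω) (hb : LinfROn b Ω) (hC : L2MOn C Ω) (hD : L2MOn D Ω)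
    (hA : MeasurableSet A) :
    Jfun Ω a b C D F ≤ Jconv Ω (A.indicator 1) (Aᶜ.indicator 1) a b C D F := by
  classical
  rw [jconv_indicator_eq_strainEnergy]
  exact setIntegral_mono (hF.integrableOn_phaseMin hΩ ha hb hC hD)
    ((hF.add (hC.piecewise hD hA)).integrableOn_mul_mdot (ha.piecewise hb hA) hΩ)
    (phaseMin_le_piecewise A F)

/-- The region where the field `F` prefers the first phase. -/
def phaseSet (a b : RV n → ℝ) (C D F : MField n) : Set (RV n) :=
  {x | 1 / 2 * a x * mdot (F x + C x) (F x + C x) ≤ 1 / 2 * b x * mdot (F x + D x) (F x + D x)}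

lemma measurable_mdot {F G : MField n} (hF : ∀ i j, Measurable fun x => F x i j)
    (hG : ∀ i j, Measurable fun x => G x i j) : Measurable fun x => mdot (F x) (G x) :=
  Finset.measurable_fun_sum _ fun i _ => Finset.measurable_fun_sum _ fun j _ =>
    (hF i j).mul (hG i j)

lemma measurableSet_phaseSet {F : MField n} (hF : L2MOn F Ω) (ha : Measurable a)
    (hb : Measurable b) (hC : L2MOn C Ω) (hD : L2MOn D Ω) :
    MeasurableSet (phaseSet a b C D F) :=
  measurableSet_le
    ((ha.const_mul _).mul (measurable_mdot (hF.add hC).1 (hF.add hC).1))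
    ((hb.const_mul _).mul (measurable_mdot (hF.add hD).1 (hF.add hD).1))

lemma jconv_phaseSet_eq_jfun (F : MField n) :
    Jconv Ω ((phaseSet a b C D F).indicator 1) ((phaseSet a b C D F)ᶜ.indicator 1) a b C D F =
      Jfun Ω a b C D F := by
  classical
  rw [jconv_indicator_eq_strainEnergy]
  refine integral_congr_ae (.of_forall fun x => ?_)
  by_cases hx : x ∈ phaseSet a b C D F
  · have hle : 1 / 2 * a x * mdot (F x + C x) (F x + C x) ≤ _ := hx
    simp only [hx, Set.piecewise_eq_of_mem, phaseMin, min_eq_left hle]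
  · have hle : 1 / 2 * b x * mdot (F x + D x) (F x + D x) ≤ _ := (not_le.1 hx).le
    simp only [hx, Set.piecewise_eq_of_notMem, phaseMin, min_eq_right hle, not_false_eq_true]

lemma AdmPair.exists_forall_jconv_indicator_le (hΩ : MeasurableSet Ω)
    (hΩb : Bornology.IsBounded Ω) {δ : ℝ} (hδ : 0 < δ) (ha : LinfROn a Ω) (hb : LinfROn b Ω)
    (haδ : ∀ᵐ x, x ∈ Ω → δ ≤ a x) (hbδ : ∀ᵐ x, x ∈ Ω → δ ≤ b x) (hC : L2MOn C Ω)
    (hD : L2MOn D Ω) (hA : MeasurableSet A) :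
    ∃ P : AdmPair n Ω, ∀ Q : AdmPair n Ω,
      Jconv Ω (A.indicator 1) (Aᶜ.indicator 1) a b C D P.E ≤
        Jconv Ω (A.indicator 1) (Aᶜ.indicator 1) a b C D Q.E := by
  classical
  have hδA : ∀ᵐ x, x ∈ Ω → δ ≤ A.piecewise a b x := by
    filter_upwards [haδ, hbδ] with x hxa hxb hxΩ
    by_cases hxA : x ∈ A
    · simpa [hxA] using hxa hxΩ
    · simpa [hxA] using hxb hxΩ
  simp only [jconv_indicator_eq_strainEnergy]
  exact AdmPair.exists_forall_strainEnergy_le hΩ hΩb (ha.piecewise hb hA) hδ hδA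
    (hC.piecewise hD hA)

lemma jfun_nonneg (ha : ∀ᵐ x, x ∈ Ω → 0 ≤ a x) (hb : ∀ᵐ x, x ∈ Ω → 0 ≤ b x)
    (hΩ : MeasurableSet Ω) (F : MField n) : 0 ≤ Jfun Ω a b C D F := by
  refine setIntegral_nonneg_of_ae_restrict ((ae_restrict_iff' hΩ).2 ?_)
  filter_upwards [ha, hb] with x hxa hxb hxΩ
  have := hxa hxΩ
  have := hxb hxΩ
  have := mdot_self_nonneg (F x + C x)
  have := mdot_self_nonneg (F x + D x)
  exact le_min (by positivity) (by positivity)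

instance : Nonempty (AdmPair n Ω) :=
  let ⟨P, _⟩ := AdmPair.exists_toLp_eq (admSubspace Ω).zero_mem
  ⟨P⟩

lemma AdmPair.exists_tendsto_jfun_alphaInf (ha : ∀ᵐ x, x ∈ Ω → 0 ≤ a x)
    (hb : ∀ᵐ x, x ∈ Ω → 0 ≤ b x) (hΩ : MeasurableSet Ω) :
    (∀ P : AdmPair n Ω, alphaInf Ω a b C D ≤ Jfun Ω a b C D P.E) ∧
      ∃ W : ℕ → AdmPair n Ω,
        Tendsto (fun k => Jfun Ω a b C D (W k).E) atTop (𝓝 (alphaInf Ω a b C D)) := by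
  have hne : {r : ℝ | ∃ P : AdmPair n Ω, r = Jfun Ω a b C D P.E}.Nonempty :=
    ⟨_, Classical.arbitrary _, rfl⟩
  have hbdd : BddBelow {r : ℝ | ∃ P : AdmPair n Ω, r = Jfun Ω a b C D P.E} :=
    ⟨0, by rintro _ ⟨P, rfl⟩; exact jfun_nonneg ha hb hΩ P.E⟩
  refine ⟨fun P => csInf_le hbdd ⟨P, rfl⟩, ?_⟩
  obtain ⟨r, -, hr, hrJ⟩ := exists_seq_tendsto_sInf hne hbdd
  choose W hW using hrJ
  exact ⟨W, hr.congr hW⟩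

lemma AdmPair.exists_minimizing_phases (hΩ : MeasurableSet Ω) (hΩb : Bornology.IsBounded Ω)
    {δ : ℝ} (hδ : 0 < δ) (ha : LinfROn a Ω) (hb : LinfROn b Ω) (haδ : ∀ᵐ x, x ∈ Ω → δ ≤ a x)
    (hbδ : ∀ᵐ x, x ∈ Ω → δ ≤ b x) (hC : L2MOn C Ω) (hD : L2MOn D Ω) :
    ∃ (P : ℕ → AdmPair n Ω) (A : ℕ → Set (RV n)), (∀ k, MeasurableSet (A k)) ∧
      Tendsto (fun k => Jfun Ω a b C D (P k).E) atTop (𝓝 (alphaInf Ω a b C D)) ∧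
      Tendsto (fun k => Jconv Ω ((A k).indicator 1) ((A k)ᶜ.indicator 1) a b C D (P k).E) atTop
        (𝓝 (alphaInf Ω a b C D)) ∧
      ∀ k, ∀ Q : AdmPair n Ω, Jconv Ω ((A k).indicator 1) ((A k)ᶜ.indicator 1) a b C D (P k).E ≤
        Jconv Ω ((A k).indicator 1) ((A k)ᶜ.indicator 1) a b C D Q.E := by
  obtain ⟨hα, W, hW⟩ := AdmPair.exists_tendsto_jfun_alphaInf (C := C) (D := D)
    (haδ.mono fun x hx hxΩ => hδ.le.trans (hx hxΩ))
    (hbδ.mono fun x hx hxΩ => hδ.le.trans (hx hxΩ)) hΩ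
  have hA k : MeasurableSet (phaseSet a b C D (W k).E) :=
    measurableSet_phaseSet (W k).l2MOn ha.1 hb.1 hC hD
  choose P hP using fun k =>
    AdmPair.exists_forall_jconv_indicator_le hΩ hΩb hδ ha hb haδ hbδ hC hD (hA k)
  have hlow k := jfun_le_jconv_indicator (P k).l2MOn hΩ ha hb hC hD (hA k)
  have hup k := (hP k (W k)).trans_eq (jconv_phaseSet_eq_jfun (W k).E)
  exact ⟨P, _, hA,
    tendsto_of_tendsto_of_tendsto_of_le_of_le tendsto_const_nhds hW (fun k => hα (P k))
      fun k => (hlow k).trans (hup k),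
    tendsto_of_tendsto_of_tendsto_of_le_of_le tendsto_const_nhds hW
      (fun k => (hα (P k)).trans (hlow k)) hup, hP⟩

lemma mdot_self_le (A B : Mat n) : mdot A A ≤ 2 * mdot (A + B) (A + B) + 2 * mdot B B := by
  simp only [mdot, Finset.mul_sum, ← Finset.sum_add_distrib, Matrix.add_apply]
  gcongr with i _ j _
  linarith [sq_nonneg (A i j + 2 * B i j)]

lemma mdot_self_le_phaseMin {δ : ℝ} (hδ : 0 < δ) {x : RV n} (ha : δ ≤ a x) (hb : δ ≤ b x)
    (F : MField n) : mdot (F x) (F x) ≤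
      4 / δ * phaseMin a b C D F x + 2 * (mdot (C x) (C x) + mdot (D x) (D x)) := by
  have hwell {w : ℝ} (hw : δ ≤ w) (K : Mat n) : mdot (F x) (F x) ≤
      4 / δ * (1 / 2 * w * mdot (F x + K) (F x + K)) + 2 * mdot K K := by
    have hle : δ * mdot (F x + K) (F x + K) ≤ w * mdot (F x + K) (F x + K) :=
      mul_le_mul_of_nonneg_right hw (mdot_self_nonneg _)
    have hdiv : mdot (F x + K) (F x + K) ≤ w * mdot (F x + K) (F x + K) / δ := by
      rwa [le_div_iff₀ hδ, mul_comm]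
    calc mdot (F x) (F x) ≤ 2 * mdot (F x + K) (F x + K) + 2 * mdot K K := mdot_self_le _ _
      _ ≤ 2 * (w * mdot (F x + K) (F x + K) / δ) + 2 * mdot K K := by gcongr
      _ = _ := by ring
  have hC := mdot_self_nonneg (C x)
  have hD := mdot_self_nonneg (D x)
  rcases min_choice (1 / 2 * a x * mdot (F x + C x) (F x + C x))
    (1 / 2 * b x * mdot (F x + D x) (F x + D x)) with hmin | hmin
  · rw [phaseMin, hmin]
    linarith [hwell ha (C x)]
  · rw [phaseMin, hmin]
    linarith [hwell hb (D x)]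

lemma AdmPair.exists_norm_toLp_sq_le_jfun (hΩ : MeasurableSet Ω) (hΩb : Bornology.IsBounded Ω)
    {δ : ℝ} (hδ : 0 < δ) (ha : LinfROn a Ω) (hb : LinfROn b Ω) (haδ : ∀ᵐ x, x ∈ Ω → δ ≤ a x)
    (hbδ : ∀ᵐ x, x ∈ Ω → δ ≤ b x) (hC : L2MOn C Ω) (hD : L2MOn D Ω) :
    ∃ c > 0, ∃ d, ∀ P : AdmPair n Ω, ‖P.toLp‖ ^ 2 ≤ c * Jfun Ω a b C D P.E + d := by
  obtain ⟨c, hc, hP⟩ := AdmPair.exists_norm_toLp_sq_le hΩb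
  have hCD : IntegrableOn (fun x => 2 * (mdot (C x) (C x) + mdot (D x) (D x))) Ω :=
    (hC.2.add hD.2).const_mul 2
  refine ⟨c * (4 / δ), by positivity,
    c * ∫ x in Ω, 2 * (mdot (C x) (C x) + mdot (D x) (D x)), fun P => (hP P).trans ?_⟩
  have hJ := (P.l2MOn.integrableOn_phaseMin hΩ ha hb hC hD).const_mul (4 / δ)
  have hstrain : ∫ x in Ω, mdot (P.E x) (P.E x) ≤ 4 / δ * Jfun Ω a b C D P.E +
      ∫ x in Ω, 2 * (mdot (C x) (C x) + mdot (D x) (D x)) := by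
    rw [Jfun, ← integral_const_mul, ← integral_add hJ hCD]
    refine setIntegral_mono_on_ae P.l2MOn.2 (hJ.add hCD) hΩ ?_
    filter_upwards [haδ, hbδ] with x hxa hxb hxΩ
    exact mdot_self_le_phaseMin hδ (hxa hxΩ) (hxb hxΩ) P.E
  rw [← P.setIntegral_mdot, mul_assoc, ← mul_add]
  exact mul_le_mul_of_nonneg_left hstrain hc.le

lemma AdmPair.exists_subseq_tendsto_of_bddAbove_jfun (hΩ : MeasurableSet Ω)
    (hΩb : Bornology.IsBounded Ω) {δ : ℝ} (hδ : 0 < δ) (ha : LinfROn a Ω) (hb : LinfROn b Ω)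
    (haδ : ∀ᵐ x, x ∈ Ω → δ ≤ a x) (hbδ : ∀ᵐ x, x ∈ Ω → δ ≤ b x) (hC : L2MOn C Ω)
    (hD : L2MOn D Ω) {P : ℕ → AdmPair n Ω}
    (hP : BddAbove (Set.range fun k => Jfun Ω a b C D (P k).E)) :
    ∃ (Q : AdmPair n Ω) (φ : ℕ → ℕ), StrictMono φ ∧ WeakL2V (fun k => (P (φ k)).u) Q.u Ω ∧
      WeakL2M (fun k => (P (φ k)).E) Q.E Ω := by
  obtain ⟨M, hM⟩ := hP
  obtain ⟨c, hc, d, hcd⟩ := AdmPair.exists_norm_toLp_sq_le_jfun hΩ hΩb hδ ha hb haδ hbδ hC hD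
  refine AdmPair.exists_subseq_tendsto hΩ (M := √(c * M + d)) fun k => Real.le_sqrt_of_sq_le ?_
  have hJM : Jfun Ω a b C D (P k).E ≤ M := hM ⟨k, rfl⟩
  exact (hcd (P k)).trans (by gcongr)

lemma LinfROn.integrableOn_mul {χ h : RV n → ℝ} (hχ : LinfROn χ Ω) (hΩ : MeasurableSet Ω)
    (hh : IntegrableOn h Ω) : IntegrableOn (fun x => χ x * h x) Ω :=
  let ⟨_, hM⟩ := hχ.2
  hh.bdd_mul hχ.1.aestronglyMeasurable ((ae_restrict_iff' hΩ).2 hM)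

lemma linfROn_of_mem_Icc {χ : RV n → ℝ} (hχ : Measurable χ) (hχ01 : ∀ x, χ x ∈ Set.Icc 0 1) :
    LinfROn χ Ω :=
  ⟨hχ, 1, .of_forall fun x _ => (abs_of_nonneg (hχ01 x).1).trans_le (hχ01 x).2⟩

lemma indicator_one_mem_Icc (A : Set (RV n)) (x : RV n) :
    (A.indicator 1 x : ℝ) ∈ Set.Icc 0 1 :=
  ⟨Set.indicator_nonneg (fun _ _ => zero_le_one) x, Set.indicator_le_self' (by simp) x⟩

lemma WeakStarLinf.one_sub {χ : ℕ → RV n → ℝ} {g : RV n → ℝ} (h : WeakStarLinf χ g Ω)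
    (hΩ : MeasurableSet Ω) (hχ : ∀ k, LinfROn (χ k) Ω) (hg : LinfROn g Ω) :
    WeakStarLinf (fun k => 1 - χ k) (1 - g) Ω := fun ψ hψ => by
  have hsplit {f : RV n → ℝ} (hf : LinfROn f Ω) :
      ∫ x in Ω, (1 - f) x * ψ x = (∫ x in Ω, ψ x) - ∫ x in Ω, f x * ψ x := by
    simp only [Pi.sub_apply, Pi.one_apply, sub_mul, one_mul]
    exact integral_sub hψ (hf.integrableOn_mul hΩ hψ)
  simpa only [hsplit hg, hsplit (hχ _)] using (h ψ hψ).const_sub _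

lemma exists_subseq_weakStarLinf_indicator (hΩ : MeasurableSet Ω) (hΩb : Bornology.IsBounded Ω)
    {A : ℕ → Set (RV n)} (hA : ∀ k, MeasurableSet (A k)) :
    ∃ (χ : RV n → ℝ) (φ : ℕ → ℕ), Measurable χ ∧ (∀ x, χ x ∈ Set.Icc 0 1) ∧ StrictMono φ ∧
      WeakStarLinf (fun k => (A (φ k)).indicator 1) χ Ω ∧
      WeakStarLinf (fun k => (A (φ k))ᶜ.indicator 1) (1 - χ) Ω := by
  have : Fact (volume Ω < ⊤) := ⟨hΩb.measure_lt_top⟩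
  have hind k : Measurable ((A k).indicator 1 : RV n → ℝ) := measurable_one.indicator (hA k)
  obtain ⟨χ, φ, hχ, hχ01, hφ, hlim⟩ := exists_subseq_tendsto_integral_mul
    (μ := volume.restrict Ω) (fun k => (hind k).aestronglyMeasurable)
    fun k => .of_forall (indicator_one_mem_Icc (A k))
  refine ⟨χ, φ, hχ, hχ01, hφ, hlim, ?_⟩
  simp only [Set.indicator_compl]
  exact WeakStarLinf.one_sub hlim hΩ
    (fun k => linfROn_of_mem_Icc (hind _) (indicator_one_mem_Icc _)) (linfROn_of_mem_Icc hχ hχ01)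

lemma LinfMOn.l2MOn {F : MField n} (hF : LinfMOn F Ω) (hΩ : MeasurableSet Ω)
    (hΩb : Bornology.IsBounded Ω) : L2MOn F Ω := by
  obtain ⟨hm, M, hM⟩ := hF
  have hconst : IntegrableOn (fun _ => M ^ 2) Ω := integrableOn_const hΩb.measure_lt_top.ne
  refine ⟨hm, integrable_finsetSum _ fun i _ => integrable_finsetSum _ fun j _ => ?_⟩
  refine hconst.mono' ((hm i j).mul (hm i j)).aestronglyMeasurable
    ((ae_restrict_iff' hΩ).2 (hM.mono fun x hx hxΩ => ?_))
  rw [Real.norm_eq_abs, abs_mul, ← sq]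
  exact pow_le_pow_left₀ (abs_nonneg _) (hx hxΩ i j) 2

end Phases

theorem statement0_general {n : ℕ} (Ω : Set (RV n)) (hΩ : MeasurableSet Ω)
    (hΩb : Bornology.IsBounded Ω)
    (δ : ℝ) (hδ : 0 < δ)
    (a b : RV n → ℝ) (ha : LinfROn a Ω) (hb : LinfROn b Ω)
    (haδ : ∀ᵐ x ∂(volume : Measure (RV n)), x ∈ Ω → δ ≤ a x)
    (hbδ : ∀ᵐ x ∂(volume : Measure (RV n)), x ∈ Ω → δ ≤ b x)
    (C D : MField n) (hC : L2MOn C Ω) (hD : L2MOn D Ω) :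
    ∃ (P : ℕ → AdmPair n Ω) (Q : AdmPair n Ω)
      (χak χbk : ℕ → RV n → ℝ) (χa χb : RV n → ℝ),
      (∀ k, Measurable (χak k)) ∧ (∀ k, Measurable (χbk k)) ∧
      (∀ k x, χak k x = 0 ∨ χak k x = 1) ∧
      (∀ k x, χbk k x = 0 ∨ χbk k x = 1) ∧
      (∀ k, ∀ᵐ x ∂(volume : Measure (RV n)), x ∈ Ω → χak k x + χbk k x = 1) ∧
      Measurable χa ∧ Measurable χb ∧
      (∀ x, χa x ∈ Set.Icc (0:ℝ) 1) ∧ (∀ x, χb x ∈ Set.Icc (0:ℝ) 1) ∧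
      (∀ᵐ x ∂(volume : Measure (RV n)), x ∈ Ω → χa x + χb x = 1) ∧
      Tendsto (fun k => Jfun Ω a b C D (P k).E) atTop (𝓝 (alphaInf Ω a b C D)) ∧
      WeakL2V (fun k => (P k).u) Q.u Ω ∧
      WeakL2M (fun k => (P k).E) Q.E Ω ∧
      WeakStarLinf χak χa Ω ∧ WeakStarLinf χbk χb Ω ∧
      Tendsto (fun k => Jconv Ω (χak k) (χbk k) a b C D (P k).E) atTop
        (𝓝 (alphaInf Ω a b C D)) ∧
      (∀ k, ∀ W : AdmPair n Ω,
        Jconv Ω (χak k) (χbk k) a b C D (P k).E ≤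
          Jconv Ω (χak k) (χbk k) a b C D W.E) := by
  obtain ⟨P, A, hA, hJ, hJc, hmin⟩ :=
    AdmPair.exists_minimizing_phases hΩ hΩb hδ ha hb haδ hbδ hC hD
  obtain ⟨Q, φ, hφ, hu, hE⟩ := AdmPair.exists_subseq_tendsto_of_bddAbove_jfun hΩ hΩb hδ ha hb
    haδ hbδ hC hD hJ.bddAbove_range
  obtain ⟨χ, ψ, hχ, hχ01, hψ, hχa, hχb⟩ :=
    exists_subseq_weakStarLinf_indicator hΩ hΩb fun k => hA (φ k)
  have hφψ := (hφ.comp hψ).tendsto_atTop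
  have h01 (B : Set (RV n)) (x : RV n) :
      (B.indicator 1 x : ℝ) = 0 ∨ (B.indicator 1 x : ℝ) = 1 := Set.indicator_eq_zero_or_self _ _ _
  have hsum (B : Set (RV n)) (x : RV n) : (B.indicator 1 x + Bᶜ.indicator 1 x : ℝ) = 1 :=
    congrFun (Set.indicator_self_add_compl B 1) x
  exact ⟨fun k => P (φ (ψ k)), Q, fun k => (A (φ (ψ k))).indicator 1,
    fun k => (A (φ (ψ k)))ᶜ.indicator 1, χ, 1 - χ, fun k => measurable_one.indicator (hA _),
    fun k => measurable_one.indicator (hA _).compl, fun k => h01 _, fun k => h01 _,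
    fun k => .of_forall fun x _ => hsum _ x, hχ, measurable_one.sub hχ, hχ01,
    fun x => Set.Icc.mem_iff_one_sub_mem.1 (hχ01 x),
    .of_forall fun x _ => add_sub_cancel _ _, hJ.comp hφψ,
    fun g hg => (hu g hg).comp hψ.tendsto_atTop, fun G hG => (hE G hG).comp hψ.tendsto_atTop,
    hχa, hχb, hJc.comp hφψ, fun k => hmin _⟩

/-- Existence of a minimizing sequence of admissible pairs solving the
convexified problems, together with weak limits of the pairs and of the phase
characteristic functions. -/
theorem statement0 {n : ℕ} (Ω : Set (RV n)) (hΩo : IsOpen Ω)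
    (hΩb : Bornology.IsBounded Ω)
    (δ : ℝ) (hδ : 0 < δ)
    (a b : RV n → ℝ) (ha : LinfROn a Ω) (hb : LinfROn b Ω)
    (haδ : ∀ᵐ x ∂(volume : Measure (RV n)), x ∈ Ω → δ ≤ a x)
    (hbδ : ∀ᵐ x ∂(volume : Measure (RV n)), x ∈ Ω → δ ≤ b x)
    (C D : MField n) (hC : LinfMOn C Ω) (hD : LinfMOn D Ω)
    (hCs : SymOn C Ω) (hDs : SymOn D Ω) :
    ∃ (P : ℕ → AdmPair n Ω) (Q : AdmPair n Ω)
      (χak χbk : ℕ → RV n → ℝ) (χa χb : RV n → ℝ),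
      (∀ k, Measurable (χak k)) ∧ (∀ k, Measurable (χbk k)) ∧
      (∀ k x, χak k x = 0 ∨ χak k x = 1) ∧
      (∀ k x, χbk k x = 0 ∨ χbk k x = 1) ∧
      (∀ k, ∀ᵐ x ∂(volume : Measure (RV n)), x ∈ Ω → χak k x + χbk k x = 1) ∧
      Measurable χa ∧ Measurable χb ∧
      (∀ x, χa x ∈ Set.Icc (0:ℝ) 1) ∧ (∀ x, χb x ∈ Set.Icc (0:ℝ) 1) ∧
      (∀ᵐ x ∂(volume : Measure (RV n)), x ∈ Ω → χa x + χb x = 1) ∧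
      -- (i) minimizing sequence for the nonconvex problem
      Tendsto (fun k => Jfun Ω a b C D (P k).E) atTop (𝓝 (alphaInf Ω a b C D)) ∧
      -- (ii) weak L² convergence of uᵏ and Eᵏ
      WeakL2V (fun k => (P k).u) Q.u Ω ∧
      WeakL2M (fun k => (P k).E) Q.E Ω ∧
      -- (iii) weak* convergence of the characteristic functions
      WeakStarLinf χak χa Ω ∧ WeakStarLinf χbk χb Ω ∧
      -- (iv) the convexified energies converge to α
      Tendsto (fun k => Jconv Ω (χak k) (χbk k) a b C D (P k).E) atTop
        (𝓝 (alphaInf Ω a b C D)) ∧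
      -- (v) each (uᵏ, Eᵏ) minimizes the k-th convexified energy
      (∀ k, ∀ W : AdmPair n Ω,
        Jconv Ω (χak k) (χbk k) a b C D (P k).E ≤
          Jconv Ω (χak k) (χbk k) a b C D W.E) :=
  statement0_general Ω hΩo.measurableSet hΩb δ hδ a b ha hb haδ hbδ C D
    (hC.l2MOn hΩo.measurableSet hΩb) (hD.l2MOn hΩo.measurableSet hΩb)

end
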